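/- arXiv:1509.01945 — 2 statements merged into one kernel-verified Lean document; each statement's English description precedes it below -/
import Mathlib

section
/- In the abstract hybrid-dimensional variational setting, assume additionally that A_m, A_f and each T_i are bounded above, i.e. ⟨A_m x, x⟩ ≤ λ̄‖x‖², ⟨A_f y, y⟩ ≤ λ̄‖y‖² and ⟨T_i z, z⟩ ≤ τ̄‖z‖² for some λ̄, τ̄ > 0. Then for every ξ ∈ (1/2, 1] and every bounded linear functional ℓ : V → ℝ, there exists a unique u ∈ V such that a_ξ(u, v) = ℓ(v) for all v ∈ V, and it satisfies the a priori estimate ‖u‖_V ≤ ‖ℓ‖ / min(λ̲, τ̲). -/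
open scoped BigOperators RealInnerProductSpace

/-!
The statement follows from the Lax–Milgram theorem once `a` is seen to be a bounded bilinear form
that is coercive with constant `min lam tau`. The coercivity constant does not degenerate as
`ξ → 1/2`: positivity of `T` at `p + m` gives `2⟪T p, m⟫ ≥ -(⟪T p, p⟫ + ⟪T m, m⟫)`, so for
`ξ ≤ 1` the jump terms are at least `(2ξ - 1)(⟪T p, p⟫ + ⟪T m, m⟫)`, and the prefactor
`(2ξ - 1)⁻¹` cancels exactly (`jump_coercive`). Uniqueness and the a priori estimate are obtained
by testing with the difference of two solutions and with the solution itself.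
-/

/-- The real inner product as a continuous bilinear map, linear (rather than conjugate-linear) in
its first argument. -/
noncomputable def innerBilin (E : Type*) [NormedAddCommGroup E] [InnerProductSpace ℝ E] :
    E →L[ℝ] E →L[ℝ] ℝ :=
  (isBoundedBilinearMap_inner (𝕜 := ℝ) (E := E)).toContinuousLinearMap

lemma innerBilin_apply {E : Type*} [NormedAddCommGroup E] [InnerProductSpace ℝ E] (x y : E) :
    innerBilin E x y = ⟪x, y⟫ := rfl

/-- Coercivity of the coupled jump terms on one fracture, with a constant independent of `ξ`. -/
lemma jump_coercive {E : Type*} [NormedAddCommGroup E] [InnerProductSpace ℝ E] (T : E →L[ℝ] E)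
    (hsym : ∀ x y : E, ⟪T x, y⟫ = ⟪x, T y⟫) {tau : ℝ} (htau : 0 < tau)
    (hT : ∀ z : E, tau * ‖z‖ ^ 2 ≤ ⟪T z, z⟫) {ξ : ℝ} (hξ : 1 / 2 < ξ) (hξ1 : ξ ≤ 1) (p m : E) :
    tau * (‖p‖ ^ 2 + ‖m‖ ^ 2) ≤
      (2 * ξ - 1)⁻¹ * (⟪T (ξ • p + (1 - ξ) • m), p⟫ + ⟪T (ξ • m + (1 - ξ) • p), m⟫) := by
  have hpos : 0 < 2 * ξ - 1 := by linarith
  have hs : ⟪T m, p⟫ = ⟪T p, m⟫ := by rw [hsym, real_inner_comm]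
  have hsum : 0 ≤ ⟪T (p + m), p + m⟫ := le_trans (by positivity) (hT (p + m))
  simp only [map_add, map_smul, inner_add_left, inner_add_right, real_inner_smul_left, hs]
    at hsum ⊢
  rw [le_inv_mul_iff₀ hpos]
  have h1 := mul_le_mul_of_nonneg_left (add_le_add (hT p) (hT m)) hpos.le
  have h2 := mul_nonneg (sub_nonneg.2 hξ1) hsum
  linarith

/-- Abstract hybrid-dimensional variational setting with two-sided bounds on the
permeability/transmissibility operators: for every `ξ ∈ (1/2, 1]` and every
bounded linear functional `ℓ`, there is a unique `u ∈ V` with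
`a_ξ(u, ·) = ℓ`, and it satisfies `‖u‖ ≤ ‖ℓ‖ / min(λ̲, τ̲)`. -/
theorem stmt_9
    {V Hm Hf : Type*}
    [NormedAddCommGroup V] [InnerProductSpace ℝ V] [CompleteSpace V]
    [NormedAddCommGroup Hm] [InnerProductSpace ℝ Hm]
    [NormedAddCommGroup Hf] [InnerProductSpace ℝ Hf]
    {ι : Type*} [Fintype ι]
    {K : ι → Type*} [∀ i, NormedAddCommGroup (K i)] [∀ i, InnerProductSpace ℝ (K i)]
    (Gm : V →L[ℝ] Hm) (Gf : V →L[ℝ] Hf)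
    (Jp Jm : ∀ i, V →L[ℝ] K i)
    (hnorm : ∀ v : V, ‖v‖ ^ 2 =
      ‖Gm v‖ ^ 2 + ‖Gf v‖ ^ 2 + ∑ i, (‖Jp i v‖ ^ 2 + ‖Jm i v‖ ^ 2))
    (Am : Hm →L[ℝ] Hm) (Af : Hf →L[ℝ] Hf) (T : ∀ i, K i →L[ℝ] K i)
    (hAmsym : ∀ x y : Hm, ⟪Am x, y⟫ = ⟪x, Am y⟫)
    (hAfsym : ∀ x y : Hf, ⟪Af x, y⟫ = ⟪x, Af y⟫)
    (hTsym : ∀ i, ∀ x y : K i, ⟪T i x, y⟫ = ⟪x, T i y⟫)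
    (lam tau lamUp tauUp : ℝ) (hlam : 0 < lam) (htau : 0 < tau)
    (hlamUp : 0 < lamUp) (htauUp : 0 < tauUp)
    (hAm : ∀ x : Hm, lam * ‖x‖ ^ 2 ≤ ⟪Am x, x⟫)
    (hAf : ∀ y : Hf, lam * ‖y‖ ^ 2 ≤ ⟪Af y, y⟫)
    (hT : ∀ i, ∀ z : K i, tau * ‖z‖ ^ 2 ≤ ⟪T i z, z⟫)
    (hAmUp : ∀ x : Hm, ⟪Am x, x⟫ ≤ lamUp * ‖x‖ ^ 2)
    (hAfUp : ∀ y : Hf, ⟪Af y, y⟫ ≤ lamUp * ‖y‖ ^ 2)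
    (hTUp : ∀ i, ∀ z : K i, ⟪T i z, z⟫ ≤ tauUp * ‖z‖ ^ 2)
    (ξ : ℝ) (hξ : 1 / 2 < ξ) (hξ1 : ξ ≤ 1)
    (a : V → V → ℝ)
    (ha : ∀ u v : V, a u v =
      ⟪Am (Gm u), Gm v⟫ + ⟪Af (Gf u), Gf v⟫ +
      (2 * ξ - 1)⁻¹ * ∑ i,
        (⟪T i (ξ • Jp i u + (1 - ξ) • Jm i u), Jp i v⟫ +
         ⟪T i (ξ • Jm i u + (1 - ξ) • Jp i u), Jm i v⟫))
    (ℓ : V →L[ℝ] ℝ) :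
    ∃ u : V, (∀ v : V, a u v = ℓ v) ∧ ‖u‖ ≤ ‖ℓ‖ / min lam tau ∧
      ∀ u' : V, (∀ v : V, a u' v = ℓ v) → u' = u := by
  have hc : 0 < min lam tau := lt_min hlam htau
  let B : V →L[ℝ] V →L[ℝ] ℝ :=
    (innerBilin Hm).bilinearComp (Am ∘L Gm) Gm + (innerBilin Hf).bilinearComp (Af ∘L Gf) Gf +
      (2 * ξ - 1)⁻¹ • ∑ i,
        ((innerBilin (K i)).bilinearComp (T i ∘L (ξ • Jp i + (1 - ξ) • Jm i)) (Jp i) +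
          (innerBilin (K i)).bilinearComp (T i ∘L (ξ • Jm i + (1 - ξ) • Jp i)) (Jm i))
  have hB : ∀ u v, B u v = a u v := by
    intro u v
    simp [B, ha, innerBilin_apply, inner_add_left, real_inner_smul_left]
  have hcoer : ∀ u, min lam tau * ‖u‖ ^ 2 ≤ B u u := by
    intro u
    have hJ : min lam tau * ∑ i, (‖Jp i u‖ ^ 2 + ‖Jm i u‖ ^ 2) ≤
        (2 * ξ - 1)⁻¹ * ∑ i,
          (⟪T i (ξ • Jp i u + (1 - ξ) • Jm i u), Jp i u⟫ +
            ⟪T i (ξ • Jm i u + (1 - ξ) • Jp i u), Jm i u⟫) := by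
      rw [Finset.mul_sum, Finset.mul_sum]
      refine Finset.sum_le_sum fun i _ => le_trans ?_
        (jump_coercive (T i) (hTsym i) htau (hT i) hξ hξ1 (Jp i u) (Jm i u))
      exact mul_le_mul_of_nonneg_right (min_le_right _ _) (by positivity)
    have hm := mul_le_mul_of_nonneg_right (min_le_left lam tau) (sq_nonneg ‖Gm u‖)
    have hf := mul_le_mul_of_nonneg_right (min_le_left lam tau) (sq_nonneg ‖Gf u‖)
    rw [hB, ha, hnorm u, mul_add, mul_add]
    linarith [hAm (Gm u), hAf (Gf u)]
  have hcB : IsCoercive B := ⟨min lam tau, hc, fun u => by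
    rw [mul_assoc, ← sq]
    exact hcoer u⟩
  -- The solution is the preimage, under the Lax–Milgram equivalence, of the Riesz vector of `ℓ`.
  let w : V := (InnerProductSpace.toDual ℝ V).symm ℓ
  let u : V := hcB.continuousLinearEquivOfBilin.symm w
  have hu : ∀ v, B u v = ℓ v := by
    intro v
    rw [← hcB.continuousLinearEquivOfBilin_apply, ContinuousLinearEquiv.apply_symm_apply]
    exact InnerProductSpace.toDual_symm_apply
  refine ⟨u, fun v => (hB u v).symm.trans (hu v), ?_, ?_⟩
  · rw [le_div_iff₀ hc]
    rcases (norm_nonneg u).eq_or_lt with h0 | h0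
    · rw [← h0, zero_mul]
      exact norm_nonneg ℓ
    · have h1 : ℓ u ≤ ‖ℓ‖ * ‖u‖ := (le_abs_self _).trans (ℓ.le_opNorm u)
      have h2 := hcoer u
      rw [hu] at h2
      refine le_of_mul_le_mul_right ?_ h0
      linarith
  · intro u' hu'
    have h := hcoer (u' - u)
    have h0 : B (u' - u) (u' - u) = 0 := by
      rw [map_sub B, sub_apply, hu, hB, hu', sub_self]
    rw [h0] at h
    have h3 : ‖u' - u‖ ^ 2 ≤ 0 := nonpos_of_mul_nonpos_right h hc
    have h4 : ‖u' - u‖ = 0 := by nlinarith [norm_nonneg (u' - u)]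
    exact sub_eq_zero.1 (norm_eq_zero.1 h4)
end

section
/- In the abstract hybrid-dimensional variational setting, for every ξ ∈ (1/2, 1] the bilinear form a_ξ is coercive on V with constant min(λ̲, τ̲): for all v ∈ V, a_ξ(v, v) ≥ min(λ̲, τ̲)·‖v‖_V². -/
open scoped BigOperators RealInnerProductSpace

/-!
Evaluated on the diagonal, the coupling term of one fracture with jumps `p`, `m` satisfies
`⟪T (ξ p + (1-ξ) m), p⟫ + ⟪T (ξ m + (1-ξ) p), m⟫
  = (2ξ-1) (⟪T p, p⟫ + ⟪T m, m⟫) + (1-ξ) ⟪T (p+m), p+m⟫`.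
For `ξ ≤ 1` the last summand is nonnegative, and the factor `2ξ-1 > 0` cancels the weight
`(2ξ-1)⁻¹` of the form, so each fracture contributes at least `τ (‖p‖² + ‖m‖²)`
(`coupling_lower_bound`). Summing with the two gradient bounds gives the coercivity constant
`min λ τ`, independent of `ξ`.
-/

/-- The coupling term of a single fracture, before division by `2ξ-1`. The cross terms occur
only as the sum `⟪T p, m⟫ + ⟪T m, p⟫`, which completes to `⟪T (p+m), p+m⟫`. -/
lemma coupling_lower_bound {E : Type*} [NormedAddCommGroup E] [InnerProductSpace ℝ E]
    (T : E →L[ℝ] E) {tau ξ : ℝ} (htau : 0 < tau)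
    (hT : ∀ z : E, tau * ‖z‖ ^ 2 ≤ ⟪T z, z⟫) (hξ : 1 / 2 < ξ) (hξ1 : ξ ≤ 1) (p m : E) :
    (2 * ξ - 1) * (tau * (‖p‖ ^ 2 + ‖m‖ ^ 2)) ≤
      ⟪T (ξ • p + (1 - ξ) • m), p⟫ + ⟪T (ξ • m + (1 - ξ) • p), m⟫ := by
  have key : ⟪T (ξ • p + (1 - ξ) • m), p⟫ + ⟪T (ξ • m + (1 - ξ) • p), m⟫ =
      (2 * ξ - 1) * (⟪T p, p⟫ + ⟪T m, m⟫) + (1 - ξ) * ⟪T (p + m), p + m⟫ := by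
    simp only [map_add, map_smul, inner_add_left, inner_add_right, real_inner_smul_left]
    ring
  have hsum : 0 ≤ ⟪T (p + m), p + m⟫ := le_trans (by positivity) (hT (p + m))
  have hcross : 0 ≤ (1 - ξ) * ⟪T (p + m), p + m⟫ := mul_nonneg (by linarith) hsum
  have hdiag : (2 * ξ - 1) * (tau * (‖p‖ ^ 2 + ‖m‖ ^ 2)) ≤
      (2 * ξ - 1) * (⟪T p, p⟫ + ⟪T m, m⟫) :=
    mul_le_mul_of_nonneg_left (by linarith [hT p, hT m]) (by linarith)
  linarith

/-- Abstract hybrid-dimensional variational setting: for every `ξ ∈ (1/2, 1]`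
the bilinear form `a_ξ` is coercive on `V` with constant `min(λ̲, τ̲)`. -/
theorem stmt_10
    {V Hm Hf : Type*}
    [NormedAddCommGroup V] [InnerProductSpace ℝ V]
    [NormedAddCommGroup Hm] [InnerProductSpace ℝ Hm]
    [NormedAddCommGroup Hf] [InnerProductSpace ℝ Hf]
    {ι : Type*} [Fintype ι]
    {K : ι → Type*} [∀ i, NormedAddCommGroup (K i)] [∀ i, InnerProductSpace ℝ (K i)]
    (Gm : V →L[ℝ] Hm) (Gf : V →L[ℝ] Hf)
    (Jp Jm : ∀ i, V →L[ℝ] K i)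
    (hnorm : ∀ v : V, ‖v‖ ^ 2 =
      ‖Gm v‖ ^ 2 + ‖Gf v‖ ^ 2 + ∑ i, (‖Jp i v‖ ^ 2 + ‖Jm i v‖ ^ 2))
    (Am : Hm →L[ℝ] Hm) (Af : Hf →L[ℝ] Hf) (T : ∀ i, K i →L[ℝ] K i)
    (hAmsym : ∀ x y : Hm, ⟪Am x, y⟫ = ⟪x, Am y⟫)
    (hAfsym : ∀ x y : Hf, ⟪Af x, y⟫ = ⟪x, Af y⟫)
    (hTsym : ∀ i, ∀ x y : K i, ⟪T i x, y⟫ = ⟪x, T i y⟫)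
    (lam tau : ℝ) (hlam : 0 < lam) (htau : 0 < tau)
    (hAm : ∀ x : Hm, lam * ‖x‖ ^ 2 ≤ ⟪Am x, x⟫)
    (hAf : ∀ y : Hf, lam * ‖y‖ ^ 2 ≤ ⟪Af y, y⟫)
    (hT : ∀ i, ∀ z : K i, tau * ‖z‖ ^ 2 ≤ ⟪T i z, z⟫)
    (ξ : ℝ) (hξ : 1 / 2 < ξ) (hξ1 : ξ ≤ 1)
    (a : V → V → ℝ)
    (ha : ∀ u v : V, a u v =
      ⟪Am (Gm u), Gm v⟫ + ⟪Af (Gf u), Gf v⟫ +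
      (2 * ξ - 1)⁻¹ * ∑ i,
        (⟪T i (ξ • Jp i u + (1 - ξ) • Jm i u), Jp i v⟫ +
         ⟪T i (ξ • Jm i u + (1 - ξ) • Jp i u), Jm i v⟫)) :
    ∀ v : V, min lam tau * ‖v‖ ^ 2 ≤ a v v := by
  intro v
  have hpos : 0 < 2 * ξ - 1 := by linarith
  have hcoupling : tau * ∑ i, (‖Jp i v‖ ^ 2 + ‖Jm i v‖ ^ 2) ≤ (2 * ξ - 1)⁻¹ * ∑ i,
      (⟪T i (ξ • Jp i v + (1 - ξ) • Jm i v), Jp i v⟫ +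
       ⟪T i (ξ • Jm i v + (1 - ξ) • Jp i v), Jm i v⟫) := by
    rw [le_inv_mul_iff₀ hpos, Finset.mul_sum, Finset.mul_sum]
    exact Finset.sum_le_sum fun i _ =>
      coupling_lower_bound (T i) htau (hT i) hξ hξ1 (Jp i v) (Jm i v)
  have hS : 0 ≤ ∑ i, (‖Jp i v‖ ^ 2 + ‖Jm i v‖ ^ 2) := Finset.sum_nonneg fun i _ => by positivity
  have hm := mul_le_mul_of_nonneg_right (min_le_left lam tau) (sq_nonneg ‖Gm v‖)
  have hf := mul_le_mul_of_nonneg_right (min_le_left lam tau) (sq_nonneg ‖Gf v‖)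
  have hJ := mul_le_mul_of_nonneg_right (min_le_right lam tau) hS
  rw [ha, hnorm, mul_add, mul_add]
  linarith [hAm (Gm v), hAf (Gf v)]
end
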